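/- In the setting of the concave-denominator fractional program and Algorithm 1, assuming the solution set C is nonempty, for every x̄ ∈ C and every k ≥ 1 the Fejér-type inequality (Lθ_k/2)‖x^k − x^{k−1}‖² + Lθ_{k+1}‖x̄ − x^k‖² − Lθ_k‖x̄ − x^{k−1}‖² ≤ (θ_k − θ_{k+1}) M holds. -/

import Mathlib

/-!
Write `t = θ (k+1)`, `t' = θ (k+2)`, `p = x k`, `q = x (k+1)`. When `t > 0`, the proximal objective
is `2Lt`-strongly convex with minimizer `q`, which gives the three-point inequality
`prox_three_point`. Expanding the squares there, and bounding `⟪∇g p, y - q⟫` from below by the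
concavity of `g` (`le_add_inner_of_concaveOn`, between `p` and `y`) and by the descent lemma for the
`L`-Lipschitz gradient (`add_inner_sub_le_of_lipschitz_gradient`, between `p` and `q`), yields
for every feasible `y`
`f q - t g q + (Lt/2)‖q - p‖² + Lt‖y - q‖² ≤ f y - t g y + Lt‖y - p‖²`.
Since `f q = t' g q`, taking `y = p` (where `f p = t g p`) shows `t' ≤ t`. Taking `y = xb` (where
`f xb = θbar g xb ≤ t g xb`) shows that the left side of the claim is at most `(t - t') g q`,
hence at most `(t - t') M`.

When `t = 0`, the convention `1 / 0 = 0` turns the step into plain minimization of `f`, whose minimum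
value on the feasible set is `f p = 0`; then `t' = 0` and both sides of the claim vanish.
-/

open Filter Topology Classical

lemma hasDerivAt_line {H : Type*} [NormedAddCommGroup H] [InnerProductSpace ℝ H] [CompleteSpace H]
    {g : H → ℝ} {g' : H → H} (hg : ∀ z, HasGradientAt g (g' z) z) (p d : H) (s : ℝ) :
    HasDerivAt (fun s : ℝ => g (p + s • d)) (inner ℝ (g' (p + s • d)) d) s := by
  have h1 : HasDerivAt (fun s : ℝ => p + s • d) d s := by
    simpa using ((hasDerivAt_id s).smul_const d).const_add p
  exact ((hg (p + s • d)).hasFDerivAt.comp_hasDerivAt s h1).congr_deriv (by simp)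

lemma le_add_inner_of_concaveOn {H : Type*} [NormedAddCommGroup H] [InnerProductSpace ℝ H]
    [CompleteSpace H] {g : H → ℝ} {g' : H → H} (hg : ∀ z, HasGradientAt g (g' z) z)
    (hc : ConcaveOn ℝ Set.univ g) (p y : H) :
    g y ≤ g p + inner ℝ (g' p) (y - p) := by
  have hline : ConcaveOn ℝ Set.univ (fun s : ℝ => g (p + s • (y - p))) := by
    have := hc.comp_affineMap (AffineMap.lineMap p y : ℝ →ᵃ[ℝ] H)
    simpa [Function.comp_def, AffineMap.lineMap_apply, add_comm] using this
  have hd := hasDerivAt_line hg p (y - p) 0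
  have := hline.slope_le_of_hasDerivAt (Set.mem_univ 0) (Set.mem_univ 1) one_pos hd
  simp [slope_def_field] at this
  linarith

/-- Descent lemma (lower bound): `s ↦ g (p + s • d) - s ⟪g' p, d⟫ + (L / 2) s² ‖d‖²` is monotone on
`[0, 1]`, because the Lipschitz bound makes its derivative nonnegative. -/
lemma add_inner_sub_le_of_lipschitz_gradient {H : Type*} [NormedAddCommGroup H]
    [InnerProductSpace ℝ H] [CompleteSpace H] {g : H → ℝ} {g' : H → H}
    (hg : ∀ z, HasGradientAt g (g' z) z) {L : ℝ} (hL : 0 < L)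
    (hlip : LipschitzWith (Real.toNNReal L) g') (p q : H) :
    g p + inner ℝ (g' p) (q - p) - L / 2 * ‖q - p‖ ^ 2 ≤ g q := by
  set d := q - p with hd
  have hder : ∀ s : ℝ, HasDerivAt
      (fun s : ℝ => g (p + s • d) - s * inner ℝ (g' p) d + L / 2 * ‖d‖ ^ 2 * s ^ 2)
      (inner ℝ (g' (p + s • d)) d - inner ℝ (g' p) d + L / 2 * ‖d‖ ^ 2 * (2 * s)) s := by
    intro s
    have h2 := (hasDerivAt_id s).mul_const (inner ℝ (g' p) d)
    have h3 := (hasDerivAt_pow 2 s).const_mul (L / 2 * ‖d‖ ^ 2)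
    exact (((hasDerivAt_line hg p d s).sub h2).add h3).congr_deriv (by simp)
  have hmono := monotoneOn_of_deriv_nonneg (convex_Icc (0 : ℝ) 1)
    (fun s _ => (hder s).continuousAt.continuousWithinAt)
    (fun s _ => (hder s).differentiableAt.differentiableWithinAt) (by
      intro s hs
      rw [interior_Icc] at hs
      rw [(hder s).deriv]
      have h1 : ‖g' (p + s • d) - g' p‖ ≤ L * (s * ‖d‖) := by
        have := hlip.norm_sub_le (p + s • d) p
        rwa [Real.coe_toNNReal L hL.le, add_sub_cancel_left, norm_smul, Real.norm_of_nonneg hs.1.le]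
          at this
      have h2 := neg_le_of_abs_le (abs_real_inner_le_norm (g' (p + s • d) - g' p) d)
      rw [inner_sub_left] at h2
      nlinarith [norm_nonneg d])
  have := hmono (Set.left_mem_Icc.2 zero_le_one) (Set.right_mem_Icc.2 zero_le_one) zero_le_one
  simp [hd] at this
  simp only [hd]
  linarith

/-- Three-point inequality: a minimizer `q` of `f + c‖· - a‖²` over a convex set satisfies the
quadratic growth bound with modulus `c`. Minimality is tested at `q + s • (y - q)`, and then
`s → 0⁺`. -/
lemma prox_three_point {H : Type*} [NormedAddCommGroup H] [InnerProductSpace ℝ H]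
    {K : Set H} {f : H → ℝ} (hf : ConvexOn ℝ K f) {c : ℝ} {a q : H} (hq : q ∈ K)
    (hmin : ∀ y ∈ K, f q + c * ‖q - a‖ ^ 2 ≤ f y + c * ‖y - a‖ ^ 2) {y : H} (hy : y ∈ K) :
    f q + c * ‖q - a‖ ^ 2 + c * ‖y - q‖ ^ 2 ≤ f y + c * ‖y - a‖ ^ 2 := by
  have key : ∀ s ∈ Set.Ioo (0 : ℝ) 1,
      f q + c * ‖q - a‖ ^ 2 + c * (1 - s) * ‖y - q‖ ^ 2 ≤ f y + c * ‖y - a‖ ^ 2 := by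
    rintro s ⟨h0, h1⟩
    have hm := hmin _ (hf.1 hq hy (sub_nonneg.2 h1.le) h0.le (by ring))
    have hcv := hf.2 hq hy (sub_nonneg.2 h1.le) h0.le (by ring)
    have e1 : (1 - s) • q + s • y - a = (q - a) + s • (y - q) := by module
    have e2 : y - a = (q - a) + (y - q) := by abel
    rw [e1, norm_add_sq_real, norm_smul, Real.norm_of_nonneg h0.le, inner_smul_right] at hm
    rw [e2, norm_add_sq_real]
    simp only [smul_eq_mul] at hcv
    refine le_of_mul_le_mul_left ?_ h0
    linear_combination hm + hcv
  have hlim : Tendsto (fun s : ℝ => f q + c * ‖q - a‖ ^ 2 + c * (1 - s) * ‖y - q‖ ^ 2) (𝓝[>] 0)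
      (𝓝 (f q + c * ‖q - a‖ ^ 2 + c * ‖y - q‖ ^ 2)) := by
    have hcont : Continuous
        (fun s : ℝ => f q + c * ‖q - a‖ ^ 2 + c * (1 - s) * ‖y - q‖ ^ 2) := by fun_prop
    simpa using (hcont.tendsto 0).mono_left nhdsWithin_le_nhds
  refine le_of_tendsto hlim ?_
  filter_upwards [Ioo_mem_nhdsGT (zero_lt_one' ℝ)] with s hs using key s hs

/-- Fejér-type inequality (2.11) for Algorithm 1 (concave denominator): for every `x̄ ∈ C` and
every `k ≥ 1`, `(Lθ_k/2)‖x^k − x^{k−1}‖² + Lθ_{k+1}‖x̄ − x^k‖² − Lθ_k‖x̄ − x^{k−1}‖²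
  ≤ (θ_k − θ_{k+1}) M` (stated with the shift `k ↦ k+1`). -/
theorem algorithm1_fejer_inequality
    {H : Type*} [NormedAddCommGroup H] [InnerProductSpace ℝ H] [CompleteSpace H]
    (S : Set H) (hS_ne : S.Nonempty) (hS_conv : Convex ℝ S) (hS_closed : IsClosed S)
    -- f : H → ℝ ∪ {+∞} is encoded via its (nonempty) effective domain D and real values f on D
    (f : H → ℝ) (D : Set H) (hf_proper : D.Nonempty)
    (hf_convex : ConvexOn ℝ D f)
    (hf_lsc : LowerSemicontinuous fun z => if z ∈ D then ((f z : ℝ) : EReal) else ⊤)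
    (hDS : (D ∩ S).Nonempty)
    (hf_nonneg : ∀ z ∈ S ∩ D, 0 ≤ f z)
    (g : H → ℝ) (g' : H → H)
    (hg_grad : ∀ z, HasGradientAt g (g' z) z)
    (hg_concave : ConcaveOn ℝ Set.univ g)
    (L : ℝ) (hL : 0 < L)
    (hg_lip : LipschitzWith (Real.toNNReal L) g')
    (M : ℝ) (hM : 0 < M)
    (hg_pos : ∀ z ∈ S, 0 < g z) (hg_le : ∀ z ∈ S, g z ≤ M)
    -- Algorithm 1: sequences x, θ, η (θ_{k+1} = f(x^k)/g(x^k) for k ≥ 0, η_k = 1/(2Lθ_k) for k ≥ 1)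
    (x : ℕ → H) (θ η : ℕ → ℝ)
    (hx0 : x 0 ∈ S ∩ D)
    (hθ : ∀ k : ℕ, θ (k + 1) = f (x k) / g (x k))
    (hη : ∀ k : ℕ, η (k + 1) = 1 / (2 * L * θ (k + 1)))
    -- x^{k+1} is the minimizer over S of y ↦ f(y) + (1/(2η_{k+1}))‖y − (x^k + θ_{k+1}η_{k+1}∇g(x^k))‖²
    (hstep : ∀ k : ℕ, x (k + 1) ∈ S ∩ D ∧ ∀ y ∈ S ∩ D,
      f (x (k + 1)) + 1 / (2 * η (k + 1)) *
          ‖x (k + 1) - (x k + (θ (k + 1) * η (k + 1)) • g' (x k))‖ ^ 2 ≤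
        f y + 1 / (2 * η (k + 1)) * ‖y - (x k + (θ (k + 1) * η (k + 1)) • g' (x k))‖ ^ 2)
    -- θ̄ = inf_{z ∈ S} f(z)/g(z) and the solution set C = {z ∈ S : f(z)/g(z) = θ̄} is nonempty
    (θbar : ℝ) (hθbar : IsGLB ((fun z => f z / g z) '' (S ∩ D)) θbar)
    (hC_ne : ∃ xb ∈ S ∩ D, f xb / g xb = θbar)
    :
    ∀ xb, xb ∈ S ∩ D → f xb / g xb = θbar →
      ∀ k : ℕ,
        L * θ (k + 1) / 2 * ‖x (k + 1) - x k‖ ^ 2 +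
            L * θ (k + 2) * ‖xb - x (k + 1)‖ ^ 2 -
            L * θ (k + 1) * ‖xb - x k‖ ^ 2 ≤
          (θ (k + 1) - θ (k + 2)) * M := by
  intro xb hxb hxbθ k
  have hmem : ∀ n, x n ∈ S ∩ D := by
    intro n
    cases n with
    | zero => exact hx0
    | succ n => exact (hstep n).1
  have hp := hmem k
  have hq := hmem (k + 1)
  have hfp : f (x k) = θ (k + 1) * g (x k) := by
    rw [hθ k, div_mul_cancel₀ _ (hg_pos _ hp.1).ne']
  have hfq : f (x (k + 1)) = θ (k + 2) * g (x (k + 1)) := by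
    rw [hθ (k + 1), div_mul_cancel₀ _ (hg_pos _ hq.1).ne']
  have hfb : f xb = θbar * g xb := by
    rw [← hxbθ, div_mul_cancel₀ _ (hg_pos _ hxb.1).ne']
  have hbar : θbar ≤ θ (k + 1) := by
    rw [hθ k]
    exact hθbar.1 ⟨x k, hp, rfl⟩
  have ht0 : 0 ≤ θ (k + 1) := by
    rw [hθ k]
    exact div_nonneg (hf_nonneg _ hp) (hg_pos _ hp.1).le
  have hgq := hg_pos _ hq.1
  have hmin := (hstep k).2
  rcases ht0.eq_or_lt with ht | ht
  · have hη0 : η (k + 1) = 0 := by rw [hη k, ← ht]; simp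
    have h1 := hmin _ hp
    have h2 := hf_nonneg _ hq
    rw [hη0, hfp, ← ht] at h1
    simp only [mul_zero, div_zero, zero_mul, add_zero] at h1
    have h3 : θ (k + 2) = 0 := by
      rw [hθ (k + 1), le_antisymm h1 h2, zero_div]
    simp [← ht, h3]
  · have hc : 1 / (2 * η (k + 1)) = L * θ (k + 1) := by
      rw [hη k]; field_simp
    have ha : θ (k + 1) * η (k + 1) = 1 / (2 * L) := by
      rw [hη k]; field_simp
    rw [hc, ha] at hmin
    have hconv : ConvexOn ℝ (S ∩ D) f :=
      hf_convex.subset Set.inter_subset_right (hS_conv.inter hf_convex.1)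
    have key : ∀ y ∈ S ∩ D,
        f (x (k + 1)) - θ (k + 1) * g (x (k + 1)) + L * θ (k + 1) / 2 * ‖x (k + 1) - x k‖ ^ 2 +
            L * θ (k + 1) * ‖y - x (k + 1)‖ ^ 2 ≤
          f y - θ (k + 1) * g y + L * θ (k + 1) * ‖y - x k‖ ^ 2 := by
      intro y hy
      have h1 := prox_three_point hconv hq hmin hy
      have hexp : ∀ z : H, L * ‖z - (x k + (1 / (2 * L)) • g' (x k))‖ ^ 2 =
          L * ‖z - x k‖ ^ 2 - inner ℝ (g' (x k)) (z - x k) +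
            L * ‖(1 / (2 * L)) • g' (x k)‖ ^ 2 := by
        intro z
        rw [← sub_sub, norm_sub_sq_real, inner_smul_right, real_inner_comm]
        field_simp
      have h2 := le_add_inner_of_concaveOn hg_grad hg_concave (x k) y
      have h3 := add_inner_sub_le_of_lipschitz_gradient hg_grad hL hg_lip (x k) (x (k + 1))
      have h4 := mul_le_mul_of_nonneg_left (add_le_add h2 h3) ht0
      linear_combination h1 + h4 - θ (k + 1) * hexp (x (k + 1)) + θ (k + 1) * hexp y
    have hLt : 0 < L * θ (k + 1) := mul_pos hL ht
    have hdec : θ (k + 2) ≤ θ (k + 1) := by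
      have h := key _ hp
      rw [hfp, hfq, sub_self, sub_self, norm_zero] at h
      have hA : 0 ≤ L * θ (k + 1) / 2 * ‖x (k + 1) - x k‖ ^ 2 := by positivity
      have hB : 0 ≤ L * θ (k + 1) * ‖x k - x (k + 1)‖ ^ 2 := by positivity
      refine le_of_mul_le_mul_right ?_ hgq
      linarith
    have h := key _ hxb
    rw [hfq, hfb] at h
    have h5 := mul_le_mul_of_nonneg_right hbar (hg_pos _ hxb.1).le
    have h6 := mul_le_mul_of_nonneg_left (hg_le _ hq.1) (sub_nonneg.2 hdec)
    have h7 : L * θ (k + 2) * ‖xb - x (k + 1)‖ ^ 2 ≤ L * θ (k + 1) * ‖xb - x (k + 1)‖ ^ 2 := by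
      gcongr
    linarith
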